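/- arXiv:math/0009018 — 2 statements merged into one kernel-verified Lean document; each statement's English description precedes it below -/
import Mathlib

section
/- If there is a strictly decreasing sequence D_n ∈ (0, D_max) with D_n → 0 such that the degeneracy condition holds at every D_n, then P is the uniform distribution on A and ρ is a permutation distortion measure. -/
open Real Finset

/-- `Q` is a probability mass function on `Fin k`. -/
def IsPmf {k : ℕ} (Q : Fin k → ℝ) : Prop := (∀ j, 0 ≤ Q j) ∧ ∑ j, Q j = 1

/-- `Λ_{P,Q}(λ) = Σ_i P_i · ln (Σ_j Q_j e^{λ ρ_ij})`. -/
noncomputable def Lam {k : ℕ} (P : Fin k → ℝ) (ρ : Fin k → Fin k → ℝ)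
    (Q : Fin k → ℝ) (l : ℝ) : ℝ :=
  ∑ i, P i * Real.log (∑ j, Q j * Real.exp (l * ρ i j))

/-- The cost `Σ_{i,j} P_i W_ij log₂ (W_ij / Q_j)` of a transition matrix `W`, with the
conventions `0 · log 0 = 0` (automatic in Lean since `Real.log 0 = 0`) and value `⊤`
if `W i j > 0` for some `j` with `Q j = 0`. -/
noncomputable def wCost {k : ℕ} (P Q : Fin k → ℝ) (W : Fin k → Fin k → ℝ) : EReal :=
  if ∀ i j, 0 < W i j → 0 < Q j then
    (((∑ i, ∑ j, P i * W i j * Real.logb 2 (W i j / Q j)) : ℝ) : EReal)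
  else ⊤

/-- `R(P,Q,D)`: infimum over row-stochastic matrices `W` with
`Σ_{i,j} P_i W_ij ρ_ij ≤ D` of the relative-entropy cost. -/
noncomputable def RPQ {k : ℕ} (P : Fin k → ℝ) (ρ : Fin k → Fin k → ℝ)
    (Q : Fin k → ℝ) (D : ℝ) : EReal :=
  ⨅ W ∈ {W : Fin k → Fin k → ℝ | (∀ i j, 0 ≤ W i j) ∧ (∀ i, ∑ j, W i j = 1) ∧
      ∑ i, ∑ j, P i * W i j * ρ i j ≤ D}, wCost P Q W

/-- The rate-distortion function `R(D) = inf_Q R(P,Q,D)`. -/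
noncomputable def RofD {k : ℕ} (P : Fin k → ℝ) (ρ : Fin k → Fin k → ℝ) (D : ℝ) : EReal :=
  ⨅ Q ∈ {Q : Fin k → ℝ | IsPmf Q}, RPQ P ρ Q D

/-- `D_max = min_j Σ_i P_i ρ_ij`. -/
noncomputable def Dmax {k : ℕ} (P : Fin k → ℝ) (ρ : Fin k → Fin k → ℝ) : ℝ :=
  sInf (Set.range fun j => ∑ i, P i * ρ i j)

/-- `ρ` is a permutation distortion measure: all rows of `(ρ_ij)` are permutations
of one another. -/
def IsPermMeasure {k : ℕ} (ρ : Fin k → Fin k → ℝ) : Prop :=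
  ∀ i i' : Fin k, ∃ σ : Equiv.Perm (Fin k), ∀ j, ρ i' j = ρ i (σ j)

/-- The degeneracy condition at distortion level `D`: there are a pmf `Q*` achieving
`R(P,Q*,D) = R(D)` and `λ* < 0` with `Λ'_{P,Q*}(λ*) = D`,
`λ*·D − Λ_{P,Q*}(λ*) = (ln 2)·R(D)`, and `Σ_j Q*_j e^{λ* ρ_ij}` independent of `i`. -/
def DegenAt {k : ℕ} (P : Fin k → ℝ) (ρ : Fin k → Fin k → ℝ) (D : ℝ) : Prop :=
  ∃ Q : Fin k → ℝ, IsPmf Q ∧ RPQ P ρ Q D = RofD P ρ D ∧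
    ∃ l : ℝ, l < 0 ∧ HasDerivAt (Lam P ρ Q) D l ∧
      ((l * D - Lam P ρ Q l : ℝ) : EReal) = (Real.log 2 : EReal) * RofD P ρ D ∧
      ∃ c : ℝ, ∀ i, ∑ j, Q j * Real.exp (l * ρ i j) = c

/-!
Let `W i j = Q j * exp (l * ρ i j) / Z i` be the tilted channel, `Z i` being its normalisation. Its
mean distortion is `Λ'(l)`, and its mutual information is `l * Λ'(l) - Λ(l) - KL(PW ‖ Q)`, where
`PW` is its output law. Hence if `l * D - Λ(l) = ln 2 * R(D)` at `D = Λ'(l)`, then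
`KL(PW ‖ Q) ≤ 0`, so `PW = Q`; when moreover `Z` is a constant `c`, this says
`∑ i, P i * exp (l * ρ i j) = c` for every `j` in the support of `Q`.

As `D → 0` the tilted channels tend to the identity. So `Q` eventually has full support, and
`exp (l * ρ i j) = W i j / W j j` forces `l → -∞`. The Laplace transforms of the laws of `ρ · j`
under `P` therefore agree for all `j` at points going to `-∞`, which makes these laws equal. The
atom of the law at `0` is `P j`, so `P` is uniform, and then the columns of `ρ` take each value
equally often.
-/

open Filter Topology

section ExponentialSums

lemma tendsto_sum_mul_exp_sub_atBot (a : ℝ → ℝ) {S : Finset ℝ} {r₀ : ℝ} (hmem : r₀ ∈ S)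
    (hmin : ∀ r ∈ S, r₀ ≤ r) :
    Tendsto (fun t => ∑ r ∈ S, a r * exp (t * (r - r₀))) atBot (𝓝 (a r₀)) := by
  have hterm : ∀ r ∈ S, Tendsto (fun t => a r * exp (t * (r - r₀))) atBot
      (𝓝 (if r = r₀ then a r else 0)) := by
    intro r hr
    split_ifs with h
    · simp [h]
    · have hpos : 0 < r - r₀ := sub_pos.2 ((hmin r hr).lt_of_ne' h)
      simpa only [mul_zero, Function.comp_apply, id_eq] using
        (tendsto_exp_atBot.comp (tendsto_id.atBot_mul_const hpos)).const_mul (a r)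
  simpa [hmem] using tendsto_finsetSum S hterm

lemma eq_zero_of_frequently_sum_mul_exp_eq_zero {a : ℝ → ℝ} {S : Finset ℝ}
    (h : ∃ᶠ t in atBot, ∑ r ∈ S, a r * exp (t * r) = 0) : ∀ r ∈ S, a r = 0 := by
  by_contra! hne
  obtain ⟨r₁, hr₁S, hr₁⟩ := hne
  obtain ⟨r₀, hr₀, hmin⟩ := (S.filter (a · ≠ 0)).exists_min_image id
    ⟨r₁, mem_filter.2 ⟨hr₁S, hr₁⟩⟩
  have hfreq : ∃ᶠ t in atBot, ∑ r ∈ S with a r ≠ 0, a r * exp (t * (r - r₀)) ∈ ({0} : Set ℝ) := by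
    refine h.mono fun t ht => ?_
    have hfactor (r : ℝ) : a r * exp (t * (r - r₀)) = exp (-(t * r₀)) * (a r * exp (t * r)) := by
      rw [mul_left_comm, ← exp_add, mul_sub, neg_add_eq_sub]
    have hsupport : ∑ r ∈ S with a r ≠ 0, a r * exp (t * r) = ∑ r ∈ S, a r * exp (t * r) :=
      sum_filter_of_ne fun r _ hr => left_ne_zero_of_mul hr
    simp_rw [Set.mem_singleton_iff, hfactor, ← mul_sum, hsupport, ht, mul_zero]
  exact (mem_filter.1 hr₀).2 (isClosed_singleton.mem_of_frequently_of_tendsto hfreq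
    (tendsto_sum_mul_exp_sub_atBot a hr₀ hmin))

variable {ι : Type*} [Fintype ι]

lemma sum_fiber_eq_zero_of_frequently_sum_mul_exp_eq_zero {w f : ι → ℝ}
    (h : ∃ᶠ t in atBot, ∑ i, w i * exp (t * f i) = 0) (r : ℝ) : ∑ i with f i = r, w i = 0 := by
  have hgroup (t : ℝ) : ∑ s ∈ univ.image f, (∑ i with f i = s, w i) * exp (t * s) =
      ∑ i, w i * exp (t * f i) := by
    rw [← sum_fiberwise_of_maps_to fun i _ => mem_image_of_mem f (mem_univ i)]
    refine sum_congr rfl fun s _ => ?_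
    rw [sum_mul]
    exact sum_congr rfl fun i hi => by rw [(mem_filter.1 hi).2]
  by_cases hr : r ∈ univ.image f
  · simp_rw [← hgroup] at h
    exact eq_zero_of_frequently_sum_mul_exp_eq_zero h r hr
  · have hempty : ∀ i ∈ univ, f i ≠ r := fun i hi hfi => hr (hfi ▸ mem_image_of_mem f hi)
    rw [filter_false_of_mem hempty, sum_empty]

lemma sum_fiber_eq_of_frequently_sum_mul_exp_eq {κ : Type*} [Fintype κ] {w f : ι → ℝ}
    {v g : κ → ℝ} (h : ∃ᶠ t in atBot, ∑ i, w i * exp (t * f i) = ∑ j, v j * exp (t * g j))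
    (r : ℝ) : ∑ i with f i = r, w i = ∑ j with g j = r, v j := by
  have hdiff := sum_fiber_eq_zero_of_frequently_sum_mul_exp_eq_zero
    (w := Sum.elim w (-v)) (f := Sum.elim f g) (h.mono fun t ht => by simp [ht]) r
  have hneg : ∑ j with g j = r, (-v) j = -∑ j with g j = r, v j := sum_neg_distrib v
  rw [sum_filter, Fintype.sum_sum_type] at hdiff
  rw [← sub_eq_zero, sub_eq_add_neg, ← hneg, sum_filter, sum_filter]
  exact hdiff

end ExponentialSums

section FiniteSums

variable {ι : Type*} [Fintype ι]

/-- `s` is the density of `Q' = Q * s` with respect to `Q`, and `∑ j, Q j * (s j * log (s j))` is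
`KL(Q' ‖ Q)`. -/
lemma eq_one_of_sum_mul_mul_log_nonpos {Q s : ι → ℝ} (hQ : ∀ j, 0 ≤ Q j) (hs : ∀ j, 0 ≤ s j)
    (hmass : ∑ j, Q j * s j = ∑ j, Q j) (hKL : ∑ j, Q j * (s j * log (s j)) ≤ 0) {j : ι}
    (hj : 0 < Q j) : s j = 1 := by
  have hnn (i : ι) : 0 ≤ Q i * InformationTheory.klFun (s i) :=
    mul_nonneg (hQ i) (InformationTheory.klFun_nonneg (hs i))
  have hsum : ∑ i, Q i * InformationTheory.klFun (s i) = ∑ i, Q i * (s i * log (s i)) := by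
    simp only [InformationTheory.klFun, mul_sub, mul_add, mul_one, sum_sub_distrib,
      sum_add_distrib, hmass, add_sub_cancel_right]
  have hzero := (sum_eq_zero_iff_of_nonneg fun i _ => hnn i).1
    (le_antisymm (hsum.trans_le hKL) (sum_nonneg fun i _ => hnn i)) j (mem_univ j)
  exact (InformationTheory.klFun_eq_zero_iff (hs j)).1
    ((mul_eq_zero.1 hzero).resolve_left hj.ne')

lemma exists_perm_comp_of_card_fiber_eq {α : Type*} [DecidableEq α] {f g : ι → α}
    (h : ∀ r, #{i | f i = r} = #{i | g i = r}) : ∃ σ : Equiv.Perm ι, ∀ i, f i = g (σ i) := by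
  have hcard (r : α) : Fintype.card {i // f i = r} = Fintype.card {i // g i = r} := by
    rw [Fintype.card_subtype, Fintype.card_subtype, h]
  let e (r : α) : {i // f i = r} ≃ {i // g i = r} := Fintype.equivOfCardEq (hcard r)
  exact ⟨Equiv.ofFiberEquiv e, fun i => (Equiv.ofFiberEquiv_map e i).symm⟩

end FiniteSums

section VanishingDistortion

variable {α ι κ : Type*} [Fintype ι] [Fintype κ] {F : Filter α}

lemma tendsto_channel_zero_of_tendsto_distortion_zero {P : ι → ℝ} {ρ : ι → κ → ℝ}
    {W : α → ι → κ → ℝ} (hP : ∀ i, 0 ≤ P i) (hρ : ∀ i j, 0 ≤ ρ i j)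
    (hW : ∀ n i j, 0 ≤ W n i j)
    (h : Tendsto (fun n => ∑ i, ∑ j, P i * W n i j * ρ i j) F (𝓝 0)) {i : ι} {j : κ}
    (hi : 0 < P i) (hij : 0 < ρ i j) : Tendsto (fun n => W n i j) F (𝓝 0) := by
  have hnn (n : α) (a : ι) (b : κ) : 0 ≤ P a * W n a b * ρ a b :=
    mul_nonneg (mul_nonneg (hP a) (hW n a b)) (hρ a b)
  have hterm (n : α) : P i * W n i j * ρ i j ≤ ∑ a, ∑ b, P a * W n a b * ρ a b :=
    (single_le_sum (f := fun b => P i * W n i b * ρ i b) (fun b _ => hnn n i b)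
      (mem_univ j)).trans
    (single_le_sum (f := fun a => ∑ b, P a * W n a b * ρ a b)
      (fun a _ => sum_nonneg fun b _ => hnn n a b) (mem_univ i))
  have hbound := h.div_const (P i * ρ i j)
  rw [zero_div] at hbound
  refine squeeze_zero (fun n => hW n i j) (fun n => ?_) hbound
  rw [le_div_iff₀ (mul_pos hi hij)]
  linarith [hterm n]

lemma tendsto_one_of_sum_eq_one_of_tendsto_zero {w : α → ι → ℝ} (hsum : ∀ n, ∑ j, w n j = 1)
    {i : ι} (h : ∀ j ≠ i, Tendsto (fun n => w n j) F (𝓝 0)) :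
    Tendsto (fun n => w n i) F (𝓝 1) := by
  classical
  have hcompl (n : α) : 1 - ∑ j ∈ univ.erase i, w n j = w n i := by
    rw [← hsum n, ← add_sum_erase univ (w n) (mem_univ i), add_sub_cancel_right]
  simpa only [hcompl, sum_const_zero, sub_zero] using
    (tendsto_finsetSum (univ.erase i) fun j hj => h j (ne_of_mem_erase hj)).const_sub 1

end VanishingDistortion

section RateDistortion

variable {k : ℕ} {P Q : Fin k → ℝ} {ρ W : Fin k → Fin k → ℝ} {D l : ℝ}

lemma IsPmf.sum_mul_pos (hQ : IsPmf Q) {g : Fin k → ℝ} (hg : ∀ j, 0 < g j) :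
    0 < ∑ j, Q j * g j := by
  obtain ⟨j, -, hj⟩ : ∃ j ∈ univ, 0 < Q j := exists_lt_of_sum_lt (by simp [hQ.2])
  exact sum_pos' (fun i _ => mul_nonneg (hQ.1 i) (hg i).le) ⟨j, mem_univ j, mul_pos hj (hg j)⟩

/-- The output law `PW` of a channel `W` whose input has law `P`. -/
def outputLaw (P : Fin k → ℝ) (W : Fin k → Fin k → ℝ) (j : Fin k) : ℝ := ∑ i, P i * W i j

/-- The mutual information, in nats, between the input of a channel `W` with input law `P` and
its output. -/
noncomputable def mutualInfo (P : Fin k → ℝ) (W : Fin k → Fin k → ℝ) : ℝ :=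
  ∑ i, ∑ j, P i * W i j * log (W i j / outputLaw P W j)

lemma isPmf_outputLaw (hP : IsPmf P) (hW : ∀ i j, 0 ≤ W i j) (hWsum : ∀ i, ∑ j, W i j = 1) :
    IsPmf (outputLaw P W) := by
  refine ⟨fun j => sum_nonneg fun i _ => mul_nonneg (hP.1 i) (hW i j), ?_⟩
  simp only [outputLaw]
  rw [sum_comm]
  simp only [← mul_sum, hWsum, mul_one, hP.2]

lemma RofD_le_mutualInfo_div_log_two (hP : IsPmf P) (hPpos : ∀ i, 0 < P i)
    (hW : ∀ i j, 0 ≤ W i j) (hWsum : ∀ i, ∑ j, W i j = 1)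
    (hD : ∑ i, ∑ j, P i * W i j * ρ i j ≤ D) :
    RofD P ρ D ≤ ((mutualInfo P W / log 2 : ℝ) : EReal) := by
  have hsupport : ∀ i j, 0 < W i j → 0 < outputLaw P W j := fun i j hij =>
    sum_pos' (fun a _ => mul_nonneg (hPpos a).le (hW a j)) ⟨i, mem_univ i, mul_pos (hPpos i) hij⟩
  calc RofD P ρ D ≤ RPQ P ρ (outputLaw P W) D := iInf₂_le _ (isPmf_outputLaw hP hW hWsum)
    _ ≤ wCost P (outputLaw P W) W := iInf₂_le W ⟨hW, hWsum, hD⟩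
    _ = ((mutualInfo P W / log 2 : ℝ) : EReal) := by
      rw [wCost, if_pos hsupport]
      simp only [mutualInfo, logb, sum_div, mul_div_assoc]

/-- The channel obtained from the output law `Q` by exponential tilting with parameter `l`; the
denominator is the partition function at the input `i`. -/
noncomputable def tiltedChannel (ρ : Fin k → Fin k → ℝ) (Q : Fin k → ℝ) (l : ℝ)
    (i j : Fin k) : ℝ :=
  Q j * exp (l * ρ i j) / ∑ j', Q j' * exp (l * ρ i j')

/-- The density, with respect to `Q`, of the output law of the tilted channel. -/
noncomputable def outputDensity (P : Fin k → ℝ) (ρ : Fin k → Fin k → ℝ) (Q : Fin k → ℝ) (l : ℝ)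
    (j : Fin k) : ℝ :=
  ∑ i, P i * (exp (l * ρ i j) / ∑ j', Q j' * exp (l * ρ i j'))

lemma IsPmf.sum_mul_exp_pos (hQ : IsPmf Q) (ρ : Fin k → Fin k → ℝ) (l : ℝ) (i : Fin k) :
    0 < ∑ j, Q j * exp (l * ρ i j) :=
  hQ.sum_mul_pos fun j => exp_pos (l * ρ i j)

lemma tiltedChannel_nonneg (hQ : IsPmf Q) (i j : Fin k) : 0 ≤ tiltedChannel ρ Q l i j :=
  div_nonneg (mul_nonneg (hQ.1 j) (exp_pos _).le) (hQ.sum_mul_exp_pos ρ l i).le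

lemma sum_tiltedChannel (hQ : IsPmf Q) (i : Fin k) : ∑ j, tiltedChannel ρ Q l i j = 1 := by
  simp only [tiltedChannel]
  rw [← sum_div, div_self (hQ.sum_mul_exp_pos ρ l i).ne']

lemma outputDensity_pos (hP : IsPmf P) (hQ : IsPmf Q) (j : Fin k) :
    0 < outputDensity P ρ Q l j :=
  hP.sum_mul_pos fun i => div_pos (exp_pos _) (hQ.sum_mul_exp_pos ρ l i)

lemma outputLaw_tiltedChannel (j : Fin k) :
    outputLaw P (tiltedChannel ρ Q l) j = Q j * outputDensity P ρ Q l j := by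
  simp only [outputLaw, tiltedChannel, outputDensity, mul_sum]
  exact sum_congr rfl fun i _ => by ring

lemma hasDerivAt_Lam (P : Fin k → ℝ) (ρ : Fin k → Fin k → ℝ) (hQ : IsPmf Q) (l : ℝ) :
    HasDerivAt (Lam P ρ Q) (∑ i, ∑ j, P i * tiltedChannel ρ Q l i j * ρ i j) l := by
  have hpartition (i : Fin k) : HasDerivAt (fun t => ∑ j, Q j * exp (t * ρ i j))
      (∑ j, Q j * (exp (l * ρ i j) * ρ i j)) l :=
    HasDerivAt.fun_sum fun j _ => (hasDerivAt_mul_const (ρ i j)).exp.const_mul (Q j)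
  have hderiv := HasDerivAt.fun_sum fun i (_ : i ∈ univ) =>
    ((hpartition i).log (hQ.sum_mul_exp_pos ρ l i).ne').const_mul (P i)
  refine hderiv.congr_deriv (sum_congr rfl fun i _ => ?_)
  rw [sum_div, mul_sum]
  exact sum_congr rfl fun j _ => by rw [tiltedChannel]; ring

lemma tiltedChannel_mul_log_div_outputLaw (hP : IsPmf P) (hQ : IsPmf Q) (i j : Fin k) :
    tiltedChannel ρ Q l i j *
        log (tiltedChannel ρ Q l i j / outputLaw P (tiltedChannel ρ Q l) j) =
      tiltedChannel ρ Q l i j *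
        (l * ρ i j - log (∑ j', Q j' * exp (l * ρ i j')) - log (outputDensity P ρ Q l j)) := by
  rcases (hQ.1 j).eq_or_lt with hQj | hQj
  · simp [tiltedChannel, ← hQj]
  · have hZ := hQ.sum_mul_exp_pos ρ l i
    have hs : 0 < outputDensity P ρ Q l j := outputDensity_pos hP hQ j
    have hratio : tiltedChannel ρ Q l i j / outputLaw P (tiltedChannel ρ Q l) j =
        exp (l * ρ i j) / (∑ j', Q j' * exp (l * ρ i j')) / outputDensity P ρ Q l j := by
      rw [outputLaw_tiltedChannel, tiltedChannel]
      field_simp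
    rw [hratio, log_div (by positivity) hs.ne', log_div (by positivity) hZ.ne', log_exp]

lemma mutualInfo_tiltedChannel (hP : IsPmf P) (hQ : IsPmf Q) :
    mutualInfo P (tiltedChannel ρ Q l) =
      l * ∑ i, ∑ j, P i * tiltedChannel ρ Q l i j * ρ i j - Lam P ρ Q l -
        ∑ j, Q j * (outputDensity P ρ Q l j * log (outputDensity P ρ Q l j)) := by
  have hLam : Lam P ρ Q l = ∑ i, ∑ j, P i *
      (tiltedChannel ρ Q l i j * log (∑ j', Q j' * exp (l * ρ i j'))) := by
    simp only [Lam, ← mul_sum, ← sum_mul, sum_tiltedChannel hQ, one_mul]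
  have hKL : ∑ j, Q j * (outputDensity P ρ Q l j * log (outputDensity P ρ Q l j)) =
      ∑ i, ∑ j, P i * (tiltedChannel ρ Q l i j * log (outputDensity P ρ Q l j)) := by
    rw [sum_comm]
    simp only [← mul_assoc, ← sum_mul, ← outputLaw_tiltedChannel, outputLaw]
  simp only [mutualInfo, mul_assoc, tiltedChannel_mul_log_div_outputLaw hP hQ, hLam, hKL, mul_sum,
    ← sum_sub_distrib]
  exact sum_congr rfl fun i _ => sum_congr rfl fun j _ => by ring

/-- The Kuhn–Tucker condition for optimality of `Q`, with equality on the support. -/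
lemma outputDensity_eq_one (hP : IsPmf P) (hPpos : ∀ i, 0 < P i) (hQ : IsPmf Q)
    (hderiv : HasDerivAt (Lam P ρ Q) D l)
    (hopt : ((l * D - Lam P ρ Q l : ℝ) : EReal) = (log 2 : EReal) * RofD P ρ D) {j : Fin k}
    (hj : 0 < Q j) : outputDensity P ρ Q l j = 1 := by
  have hlog2 : 0 < log 2 := log_pos one_lt_two
  have hD : ∑ i, ∑ j, P i * tiltedChannel ρ Q l i j * ρ i j = D :=
    (hasDerivAt_Lam P ρ hQ l).unique hderiv
  have hinfo : l * D - Lam P ρ Q l ≤ mutualInfo P (tiltedChannel ρ Q l) := by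
    rw [← EReal.coe_le_coe_iff, hopt, ← mul_div_cancel₀ (mutualInfo _ _) hlog2.ne', EReal.coe_mul]
    exact mul_le_mul_of_nonneg_left (RofD_le_mutualInfo_div_log_two hP hPpos
      (tiltedChannel_nonneg hQ) (sum_tiltedChannel hQ) hD.le) (EReal.coe_nonneg.2 hlog2.le)
  rw [mutualInfo_tiltedChannel hP hQ, hD] at hinfo
  refine eq_one_of_sum_mul_mul_log_nonpos hQ.1 (fun j => (outputDensity_pos hP hQ j).le) ?_
    (by linarith) hj
  simp only [← outputLaw_tiltedChannel]
  exact (isPmf_outputLaw hP (tiltedChannel_nonneg hQ) (sum_tiltedChannel hQ)).2.trans hQ.2.symm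

lemma DegenAt.exists_tiltedChannel (hP : IsPmf P) (hPpos : ∀ i, 0 < P i)
    (h : DegenAt P ρ D) :
    ∃ (Q : Fin k → ℝ) (l c : ℝ), IsPmf Q ∧
      ∑ i, ∑ j, P i * tiltedChannel ρ Q l i j * ρ i j = D ∧
      (∀ i, ∑ j, Q j * exp (l * ρ i j) = c) ∧
      ∀ j, 0 < Q j → ∑ i, P i * exp (l * ρ i j) = c := by
  obtain ⟨Q, hQ, -, l, -, hderiv, hopt, c, hc⟩ := h
  refine ⟨Q, l, c, hQ, (hasDerivAt_Lam P ρ hQ l).unique hderiv, hc, fun j hj => ?_⟩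
  have hdensity := outputDensity_eq_one hP hPpos hQ hderiv hopt hj
  simp only [outputDensity, hc, ← mul_div_assoc, ← sum_div] at hdensity
  exact eq_of_div_eq_one hdensity

end RateDistortion

section SmallDistortion

variable {k : ℕ} {P : Fin k → ℝ} {ρ : Fin k → Fin k → ℝ}

lemma tendsto_atBot_of_tendsto_tiltedChannel {α : Type*} {F : Filter α} {Q : α → Fin k → ℝ}
    {l c : α → ℝ} (hc : ∀ n i, ∑ j, Q n j * exp (l n * ρ i j) = c n) {i j : Fin k}
    (hjj : ρ j j = 0) (hij : 0 < ρ i j)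
    (hdiag : Tendsto (fun n => tiltedChannel ρ (Q n) (l n) j j) F (𝓝 1))
    (hoff : Tendsto (fun n => tiltedChannel ρ (Q n) (l n) i j) F (𝓝 0)) :
    Tendsto l F atBot := by
  have hexp : Tendsto (fun n => exp (l n * ρ i j)) F (𝓝 0) := by
    have hquot := hoff.div hdiag one_ne_zero
    rw [zero_div] at hquot
    -- The partition functions at `i` and `j` are equal, so the quotient is `exp (l * ρ i j)`.
    refine hquot.congr' ?_
    filter_upwards [hdiag.eventually_ne one_ne_zero] with n hn
    rw [Pi.div_apply, div_eq_iff hn]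
    simp only [tiltedChannel, hc, hjj, mul_zero, exp_zero, mul_one]
    ring
  rw [tendsto_exp_comp_nhds_zero] at hexp
  simpa [hij.ne'] using hexp.atBot_mul_const (inv_pos.2 hij)

lemma sum_fiber_column_eq_of_degenAt (hP : IsPmf P) (hPpos : ∀ i, 0 < P i)
    (hρnn : ∀ i j, 0 ≤ ρ i j) (hρzero : ∀ i j, ρ i j = 0 ↔ i = j) {D : ℕ → ℝ}
    (hD : Tendsto D atTop (𝓝 0)) (hdeg : ∀ n, DegenAt P ρ (D n)) (j j' : Fin k) (r : ℝ) :
    ∑ i with ρ i j = r, P i = ∑ i with ρ i j' = r, P i := by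
  rcases eq_or_ne j j' with rfl | hjj'
  · rfl
  choose Q l c hQ hdist hrow hcol using fun n => (hdeg n).exists_tiltedChannel hP hPpos
  have hρpos {a b : Fin k} (hab : a ≠ b) : 0 < ρ a b :=
    (hρnn a b).lt_of_ne' (mt (hρzero a b).1 hab)
  have hoff {a b : Fin k} (hab : a ≠ b) :
      Tendsto (fun n => tiltedChannel ρ (Q n) (l n) a b) atTop (𝓝 0) :=
    tendsto_channel_zero_of_tendsto_distortion_zero hP.1 hρnn
      (fun n => tiltedChannel_nonneg (hQ n)) (by simpa only [hdist] using hD) (hPpos a) (hρpos hab)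
  have hdiag (a : Fin k) : Tendsto (fun n => tiltedChannel ρ (Q n) (l n) a a) atTop (𝓝 1) :=
    tendsto_one_of_sum_eq_one_of_tendsto_zero (fun n => sum_tiltedChannel (hQ n) a)
      fun b hb => hoff hb.symm
  have hl : Tendsto l atTop atBot :=
    tendsto_atBot_of_tendsto_tiltedChannel hrow ((hρzero j j).2 rfl) (hρpos hjj'.symm) (hdiag j)
      (hoff hjj'.symm)
  have hcolumn (a : Fin k) : ∀ᶠ n in atTop, ∑ i, P i * exp (l n * ρ i a) = c n := by
    filter_upwards [(hdiag a).eventually_ne one_ne_zero] with n hn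
    refine hcol n a (((hQ n).1 a).lt_of_ne' fun hQa => hn ?_)
    simp [tiltedChannel, hQa]
  refine sum_fiber_eq_of_frequently_sum_mul_exp_eq (hl.frequently (Eventually.frequently ?_)) r
  filter_upwards [hcolumn j, hcolumn j'] with n hj hj' using hj.trans hj'.symm

lemma IsPmf.eq_one_div_of_forall_eq (hP : IsPmf P) (h : ∀ i j, P i = P j) (i : Fin k) :
    P i = 1 / (k : ℝ) := by
  have hsum : (k : ℝ) * P i = 1 := by simpa [h _ i] using hP.2
  exact eq_one_div_of_mul_eq_one_right hsum

end SmallDistortion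

theorem stmt_1_general {k : ℕ} (P : Fin k → ℝ) (ρ : Fin k → Fin k → ℝ)
    (hP : IsPmf P) (hPpos : ∀ i, 0 < P i)
    (hρnn : ∀ i j, 0 ≤ ρ i j) (hρzero : ∀ i j, ρ i j = 0 ↔ i = j)
    (D : ℕ → ℝ) (hD : Tendsto D atTop (𝓝 0)) (hdeg : ∀ n, DegenAt P ρ (D n)) :
    (∀ i, P i = 1 / (k : ℝ)) ∧ IsPermMeasure fun i j => ρ j i := by
  have hfiber := sum_fiber_column_eq_of_degenAt hP hPpos hρnn hρzero hD hdeg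
  have hatom (j : Fin k) : ∑ i with ρ i j = 0, P i = P j := by
    simp [hρzero, filter_eq']
  have hunif : ∀ i, P i = 1 / (k : ℝ) :=
    hP.eq_one_div_of_forall_eq fun i j => by rw [← hatom i, ← hatom j, hfiber]
  refine ⟨hunif, fun j j' => exists_perm_comp_of_card_fiber_eq (f := fun i => ρ i j')
    (g := fun i => ρ i j) fun r => ?_⟩
  have hweights := hfiber j' j r
  rw [sum_congr rfl fun i _ => (hunif i).trans (hunif j).symm,
    sum_congr rfl fun i _ => (hunif i).trans (hunif j).symm, sum_const, sum_const,
    nsmul_eq_mul, nsmul_eq_mul] at hweights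
  exact_mod_cast mul_right_cancel₀ (hPpos j).ne' hweights

/-- **Theorem 1(b).** If the degeneracy condition holds along a strictly decreasing
sequence `D_n ∈ (0, D_max)` with `D_n → 0`, then `P` is uniform and `ρ` is a
permutation distortion measure. -/
theorem stmt_1 {k : ℕ} (hk : 2 ≤ k)
    (P : Fin k → ℝ) (ρ : Fin k → Fin k → ℝ)
    (hP : IsPmf P) (hPpos : ∀ i, 0 < P i)
    (hρnn : ∀ i j, 0 ≤ ρ i j) (hρsym : ∀ i j, ρ i j = ρ j i)
    (hρzero : ∀ i j, ρ i j = 0 ↔ i = j)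
    (hDmax : 0 < Dmax P ρ)
    (Dseq : ℕ → ℝ) (hanti : StrictAnti Dseq)
    (hmem : ∀ n, Dseq n ∈ Set.Ioo 0 (Dmax P ρ))
    (hlim : Filter.Tendsto Dseq Filter.atTop (nhds 0))
    (hdeg : ∀ n, DegenAt P ρ (Dseq n)) :
    (∀ i, P i = 1 / (k : ℝ)) ∧ IsPermMeasure ρ := by
  simpa only [hρsym] using
    stmt_1_general P ρ hP hPpos hρnn hρzero Dseq hlim hdeg
end

section
/- Fix D ∈ (0, D_max). A probability mass function Q* on A achieves the infimum defining R(D), i.e., R(P,Q*,D) = R(D), if and only if there exists λ* < 0 such that all of the following hold: (a) Λ'_{P,Q*}(λ*) = D; (b) defining W(a_i, a_j) := P_i · Q*(a_j) · e^{λ* ρ_ij} / Σ_{j'} Q*(a_{j'}) e^{λ* ρ_{ij'}}, one has Σ_i W(a_i, a_j) = Q*(a_j) for every j; and (c) whenever Q*(a_j) = 0, Σ_i P_i · e^{λ* ρ_ij} / Σ_{j'} Q*(a_{j'}) e^{λ* ρ_{ij'}} ≤ 1. -/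
open Real Finset

/-!
The rate `R(D)` is the optimal value, as a function of the constraint level `D`, of a convex program
over pairs `(Q, W)`, so it is convex and a supporting line of slope `l` at `D` is a Lagrange
multiplier. For fixed `Q` and `l` the Lagrangian is minimised by the tilted channel
`W_ij ∝ Q_j e^{l ρ_ij}` (Gibbs variational principle), with value `l D - Λ_{P,Q}(l)`. Hence `Q`
achieves the infimum if and only if for some `l < 0` the pair `(l, Q)` is a saddle point of
`l D - Λ_{P,Q}(l)`: stationarity in `l` is condition (a), and minimality in `Q` over the simplex,
`Λ_{P,Q}(l)` being concave in `Q`, is equivalent to the Kuhn–Tucker conditions (b) and (c).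
-/

namespace RateDistortion

section ConvexProgram

variable {E : Type*} {C : Set E} {F g : E → ℝ} {D : ℝ}

/-- The optimal value of the program minimising `F` over `C` subject to `g ≤ D`, as a function of
`D`. It is the junk value `0` if the program is infeasible or unbounded below. -/
noncomputable def optValue (C : Set E) (F g : E → ℝ) (D : ℝ) : ℝ :=
  sInf (F '' {x ∈ C | g x ≤ D})

theorem optValue_le (hF : BddBelow (F '' C)) {x : E} (hx : x ∈ C) (hgx : g x ≤ D) :
    optValue C F g D ≤ F x :=
  csInf_le (hF.mono (Set.image_mono (Set.sep_subset C _))) ⟨x, ⟨hx, hgx⟩, rfl⟩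

variable [AddCommGroup E] [Module ℝ E]

theorem convexOn_optValue (hF : ConvexOn ℝ C F) (hg : ConvexOn ℝ C g) (hbdd : BddBelow (F '' C)) :
    ConvexOn ℝ {D | ∃ x ∈ C, g x ≤ D} (optValue C F g) := by
  have convex_constraint {x y : E} {d e a b : ℝ} (hx : x ∈ C) (hgx : g x ≤ d) (hy : y ∈ C)
      (hgy : g y ≤ e) (ha : 0 ≤ a) (hb : 0 ≤ b) (hab : a + b = 1) :
      g (a • x + b • y) ≤ a • d + b • e :=
    (hg.2 hx hy ha hb hab).trans (by simp only [smul_eq_mul]; gcongr)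
  refine ⟨?_, ?_⟩
  · rintro d ⟨x, hx, hgx⟩ e ⟨y, hy, hgy⟩ a b ha hb hab
    exact ⟨a • x + b • y, hF.1 hx hy ha hb hab, convex_constraint hx hgx hy hgy ha hb hab⟩
  · rintro d ⟨x₀, hx₀, hgx₀⟩ e ⟨y₀, hy₀, hgy₀⟩ a b ha hb hab
    refine le_of_forall_pos_le_add fun ε hε => ?_
    obtain ⟨_, ⟨x, ⟨hx, hgx⟩, rfl⟩, hFx⟩ := exists_lt_of_csInf_lt
      (s := F '' {x ∈ C | g x ≤ d}) ⟨_, x₀, ⟨hx₀, hgx₀⟩, rfl⟩ (lt_add_of_pos_right _ hε)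
    obtain ⟨_, ⟨y, ⟨hy, hgy⟩, rfl⟩, hFy⟩ := exists_lt_of_csInf_lt
      (s := F '' {x ∈ C | g x ≤ e}) ⟨_, y₀, ⟨hy₀, hgy₀⟩, rfl⟩ (lt_add_of_pos_right _ hε)
    calc optValue C F g (a • d + b • e)
        ≤ F (a • x + b • y) := optValue_le hbdd (hF.1 hx hy ha hb hab)
          (convex_constraint hx hgx hy hgy ha hb hab)
      _ ≤ a * F x + b * F y := hF.2 hx hy ha hb hab
      _ ≤ a * (optValue C F g d + ε) + b * (optValue C F g e + ε) := by
          gcongr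
          exacts [hFx.le, hFy.le]
      _ = a • optValue C F g d + b • optValue C F g e + ε := by
          simp only [smul_eq_mul]
          linear_combination ε * hab

theorem exists_supporting_line {S : Set ℝ} {f : ℝ → ℝ} (hf : ConvexOn ℝ S f)
    (hD : D ∈ interior S) : ∃ l, ∀ x ∈ S, f D + l * (x - D) ≤ f x := by
  refine ⟨derivWithin f (Set.Ioi D) D, fun x hx => ?_⟩
  rcases lt_trichotomy x D with hlt | rfl | hlt
  · have hslope := (hf.slope_le_leftDeriv_of_mem_interior hx hD hlt).trans
      (hf.leftDeriv_le_rightDeriv_of_mem_interior hD)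
    rw [slope_def_field, div_le_iff₀ (sub_pos.2 hlt)] at hslope
    linarith
  · simp
  · have hslope := hf.rightDeriv_le_slope_of_mem_interior hD hx hlt
    rw [slope_def_field, le_div_iff₀ (sub_pos.2 hlt)] at hslope
    linarith

theorem exists_lagrange_multiplier (hF : ConvexOn ℝ C F) (hg : ConvexOn ℝ C g)
    (hbdd : BddBelow (F '' C)) (slater : ∃ x ∈ C, g x < D) :
    ∃ l, ∀ x ∈ C, optValue C F g D ≤ F x + l * (D - g x) := by
  obtain ⟨x₀, hx₀, hgx₀⟩ := slater
  have hD : D ∈ interior {D | ∃ x ∈ C, g x ≤ D} := mem_interior_iff_mem_nhds.2 <| by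
    filter_upwards [Ioi_mem_nhds hgx₀] with d hd
    exact ⟨x₀, hx₀, le_of_lt hd⟩
  obtain ⟨l, hl⟩ := exists_supporting_line (convexOn_optValue hF hg hbdd) hD
  refine ⟨l, fun x hx => ?_⟩
  linarith [hl (g x) ⟨x, hx, le_rfl⟩, optValue_le (g := g) hbdd hx le_rfl]

end ConvexProgram

section RelativeEntropy

theorem mul_log_add_sub_le_mul_log_div {w q t : ℝ} (hw : 0 ≤ w) (hq : 0 ≤ q)
    (hwq : 0 < w → 0 < q) (ht : 0 < t) :
    w * log t + w - t * q ≤ w * log (w / q) := by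
  rcases hw.eq_or_lt with rfl | hw
  · simp [mul_nonneg ht.le hq]
  have hq := hwq hw
  have hlog := mul_le_mul_of_nonneg_left
    (log_le_sub_one_of_pos (div_pos (mul_pos ht hq) hw)) hw.le
  rw [log_div (by positivity) hw.ne', log_mul ht.ne' hq.ne', mul_sub_one,
    mul_div_cancel₀ _ hw.ne'] at hlog
  rw [log_div hw.ne' hq.ne']
  linarith

theorem convexOn_mul_log_div :
    ConvexOn ℝ {p : ℝ × ℝ | 0 ≤ p.1 ∧ 0 ≤ p.2 ∧ (0 < p.1 → 0 < p.2)}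
      (fun p => p.1 * log (p.1 / p.2)) := by
  have scaled {a w q : ℝ} (ha : 0 ≤ a) (hw : 0 ≤ w) (hwq : 0 < w → 0 < q) (haw : 0 < a * w) :
      0 < a * q :=
    mul_pos (pos_of_mul_pos_left haw hw) (hwq (pos_of_mul_pos_right haw ha))
  have convex_dom : Convex ℝ {p : ℝ × ℝ | 0 ≤ p.1 ∧ 0 ≤ p.2 ∧ (0 < p.1 → 0 < p.2)} := by
    rintro ⟨w, q⟩ ⟨hw, hq, hwq⟩ ⟨w', q'⟩ ⟨hw', hq', hwq'⟩ a b ha hb -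
    simp only [Set.mem_ofPred_eq, Prod.smul_mk, Prod.mk_add_mk, smul_eq_mul] at *
    refine ⟨by positivity, by positivity, fun hpos => ?_⟩
    rcases lt_or_lt_of_add_lt_add ((add_zero (0 : ℝ)).trans_lt hpos) with haw | hbw
    · exact add_pos_of_pos_of_nonneg (scaled ha hw hwq haw) (mul_nonneg hb hq')
    · exact add_pos_of_nonneg_of_pos (mul_nonneg ha hq) (scaled hb hw' hwq' hbw)
  refine ⟨convex_dom, fun x hx y hy a b ha hb hab => ?_⟩
  obtain ⟨hw, -, hwq⟩ := convex_dom hx hy ha hb hab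
  obtain ⟨w, q⟩ := x
  obtain ⟨w', q'⟩ := y
  obtain ⟨hw₁, hq₁, hwq₁⟩ := hx
  obtain ⟨hw₂, hq₂, hwq₂⟩ := hy
  simp only [Prod.smul_mk, Prod.mk_add_mk, smul_eq_mul] at *
  rcases hw.eq_or_lt with hzero | hpos
  · obtain ⟨haw, hbw⟩ := (add_eq_zero_iff_of_nonneg (mul_nonneg ha hw₁) (mul_nonneg hb hw₂)).1
      hzero.symm
    simp [← mul_assoc, haw, hbw]
  · -- both tangent inequalities are taken at the ratio of the averaged point
    have hq := hwq hpos
    set t := (a * w + b * w') / (a * q + b * q')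
    have ht_pos : 0 < t := div_pos hpos hq
    have ht : t * (a * q + b * q') = a * w + b * w' := div_mul_cancel₀ _ hq.ne'
    have tangent := mul_le_mul_of_nonneg_left
      (mul_log_add_sub_le_mul_log_div hw₁ hq₁ hwq₁ ht_pos) ha
    have tangent' := mul_le_mul_of_nonneg_left
      (mul_log_add_sub_le_mul_log_div hw₂ hq₂ hwq₂ ht_pos) hb
    linear_combination tangent + tangent' + ht

variable {β : Type*} [Fintype β] {q w φ : β → ℝ}

/-- The relative entropy `∑ w log (w / q)` of `w` with respect to `q`, in nats. Meaningful only if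
`w` vanishes wherever `q` does: `log (w / 0) = 0` in Lean. -/
noncomputable def relEntropy (w q : β → ℝ) : ℝ := ∑ j, w j * log (w j / q j)

/-- The partition function (exponential moment) of `φ` under `q`. -/
noncomputable def partitionFunction (q φ : β → ℝ) : ℝ := ∑ j, q j * exp (φ j)

/-- The exponentially tilted (Gibbs) distribution with density proportional to `e^φ` under `q`. -/
noncomputable def expTilt (q φ : β → ℝ) (j : β) : ℝ := q j * exp (φ j) / partitionFunction q φ

theorem partitionFunction_pos (hq : q ∈ stdSimplex ℝ β) : 0 < partitionFunction q φ := by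
  exact (convex_Ioi (0 : ℝ)).sum_mem (fun j _ => hq.1 j) hq.2 fun j _ => exp_pos (φ j)

theorem expTilt_mem_stdSimplex (hq : q ∈ stdSimplex ℝ β) : expTilt q φ ∈ stdSimplex ℝ β := by
  have hZ := partitionFunction_pos (φ := φ) hq
  refine ⟨fun j => div_nonneg (mul_nonneg (hq.1 j) (exp_pos _).le) hZ.le, ?_⟩
  simp only [expTilt, ← sum_div]
  exact div_self hZ.ne'

theorem pos_of_expTilt_pos (hq : q ∈ stdSimplex ℝ β) {j : β} (hj : 0 < expTilt q φ j) :
    0 < q j :=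
  (hq.1 j).lt_of_ne fun h => by simp [expTilt, ← h] at hj

theorem sum_mul_log_exp_div_partitionFunction (hq : q ∈ stdSimplex ℝ β) (hw : ∑ j, w j = 1) :
    ∑ j, w j * log (exp (φ j) / partitionFunction q φ) =
      ∑ j, w j * φ j - log (partitionFunction q φ) := by
  simp only [log_div (exp_pos _).ne' (partitionFunction_pos hq).ne', log_exp, mul_sub,
    sum_sub_distrib, ← sum_mul, hw, one_mul]

theorem sum_mul_sub_log_partitionFunction_le_relEntropy (hq : q ∈ stdSimplex ℝ β)
    (hw : w ∈ stdSimplex ℝ β) (hwq : ∀ j, 0 < w j → 0 < q j) :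
    ∑ j, w j * φ j - log (partitionFunction q φ) ≤ relEntropy w q := by
  have hZ := partitionFunction_pos (φ := φ) hq
  have tilt_sum : ∑ j, exp (φ j) / partitionFunction q φ * q j = 1 := by
    rw [← (expTilt_mem_stdSimplex (φ := φ) hq).2]
    exact sum_congr rfl fun j _ => by rw [expTilt]; ring
  calc ∑ j, w j * φ j - log (partitionFunction q φ)
      = ∑ j, (w j * log (exp (φ j) / partitionFunction q φ) + w j
          - exp (φ j) / partitionFunction q φ * q j) := by
        rw [sum_sub_distrib, sum_add_distrib, sum_mul_log_exp_div_partitionFunction hq hw.2, hw.2,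
          tilt_sum, add_sub_cancel_right]
    _ ≤ relEntropy w q := sum_le_sum fun j _ =>
        mul_log_add_sub_le_mul_log_div (hw.1 j) (hq.1 j) (hwq j) (div_pos (exp_pos _) hZ)

theorem relEntropy_expTilt (hq : q ∈ stdSimplex ℝ β) :
    relEntropy (expTilt q φ) q =
      ∑ j, expTilt q φ j * φ j - log (partitionFunction q φ) := by
  rw [← sum_mul_log_exp_div_partitionFunction hq (expTilt_mem_stdSimplex hq).2]
  refine sum_congr rfl fun j _ => ?_
  rcases eq_or_ne (q j) 0 with hj | hj
  · simp [expTilt, hj]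
  · rw [expTilt, mul_div_assoc, mul_div_cancel_left₀ _ hj]

end RelativeEntropy

section Channels

variable {α β : Type*} [Fintype β]
  {P : α → ℝ} {ρ : α → β → ℝ} {Q : β → ℝ} {W : α → β → ℝ} {l : ℝ}

/-- The channel `W_ij ∝ Q_j e^{l ρ_ij}`. -/
noncomputable def tiltedChannel (ρ : α → β → ℝ) (Q : β → ℝ) (l : ℝ) (i : α) : β → ℝ :=
  expTilt Q fun j => l * ρ i j

/-- The pairs `(Q, W)` of an output law and a channel for which the cost of `W` relative to `Q` is
finite. -/
def testChannels (α β : Type*) [Fintype β] : Set ((β → ℝ) × (α → β → ℝ)) :=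
  {x | x.1 ∈ stdSimplex ℝ β ∧ ∀ i, x.2 i ∈ stdSimplex ℝ β ∧ ∀ j, 0 < x.2 i j → 0 < x.1 j}

theorem mk_tiltedChannel_mem_testChannels (hQ : Q ∈ stdSimplex ℝ β) :
    (Q, tiltedChannel ρ Q l) ∈ testChannels α β :=
  ⟨hQ, fun i =>
    ⟨expTilt_mem_stdSimplex hQ, fun _ => pos_of_expTilt_pos (φ := fun j => l * ρ i j) hQ⟩⟩

theorem tiltedChannel_zero (hQ : Q ∈ stdSimplex ℝ β) : tiltedChannel ρ Q 0 = fun _ => Q := by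
  ext i j
  simp [tiltedChannel, expTilt, partitionFunction, hQ.2]

theorem mk_apply_mem_of_mem_testChannels {x : (β → ℝ) × (α → β → ℝ)}
    (hx : x ∈ testChannels α β) (i : α) (j : β) :
    (x.2 i j, x.1 j) ∈ {p : ℝ × ℝ | 0 ≤ p.1 ∧ 0 ≤ p.2 ∧ (0 < p.1 → 0 < p.2)} :=
  ⟨(hx.2 i).1.1 j, hx.1.1 j, (hx.2 i).2 j⟩

theorem convex_testChannels : Convex ℝ (testChannels α β) := fun _ hx _ hy _ _ ha hb hab =>
  ⟨convex_stdSimplex ℝ β hx.1 hy.1 ha hb hab, fun i =>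
    ⟨convex_stdSimplex ℝ β (hx.2 i).1 (hy.2 i).1 ha hb hab, fun j =>
      (convexOn_mul_log_div.1 (mk_apply_mem_of_mem_testChannels hx i j)
        (mk_apply_mem_of_mem_testChannels hy i j) ha hb hab).2.2⟩⟩

variable [Fintype α]

/-- The expected distortion of the channel `W` under the source `P`. -/
noncomputable def expDist (P : α → ℝ) (ρ : α → β → ℝ) (W : α → β → ℝ) : ℝ :=
  ∑ i, ∑ j, P i * W i j * ρ i j

/-- The cost, in nats, of the channel `W` relative to the output law `Q`. -/
noncomputable def infoCost (P : α → ℝ) (Q : β → ℝ) (W : α → β → ℝ) : ℝ :=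
  ∑ i, P i * relEntropy (W i) Q

/-- `Λ_{P,Q}(l)` for arbitrary finite source and reproduction alphabets. -/
noncomputable def logPartition (P : α → ℝ) (ρ : α → β → ℝ) (Q : β → ℝ) (l : ℝ) : ℝ :=
  ∑ i, P i * log (partitionFunction Q fun j => l * ρ i j)

/-- The finite costs, in nats, over which `R(P,Q,D)` is the infimum. -/
def costs (P : α → ℝ) (ρ : α → β → ℝ) (Q : β → ℝ) (D : ℝ) : Set ℝ :=
  infoCost P Q '' {W | (Q, W) ∈ testChannels α β ∧ expDist P ρ W ≤ D}

/-- The rate-distortion function, in nats. -/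
noncomputable def rate (P : α → ℝ) (ρ : α → β → ℝ) (D : ℝ) : ℝ :=
  optValue (testChannels α β) (fun x => infoCost P x.1 x.2) (fun x => expDist P ρ x.2) D

theorem mul_expDist_sub_logPartition :
    l * expDist P ρ W - logPartition P ρ Q l =
      ∑ i, P i * (∑ j, W i j * (l * ρ i j) - log (partitionFunction Q fun j => l * ρ i j)) := by
  simp only [expDist, logPartition, mul_sub, sum_sub_distrib, mul_sum]
  congr! 3
  ring

theorem mul_expDist_sub_logPartition_le_infoCost (hP : ∀ i, 0 ≤ P i)
    (hQW : (Q, W) ∈ testChannels α β) :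
    l * expDist P ρ W - logPartition P ρ Q l ≤ infoCost P Q W := by
  rw [mul_expDist_sub_logPartition]
  exact sum_le_sum fun i _ => mul_le_mul_of_nonneg_left
    (sum_mul_sub_log_partitionFunction_le_relEntropy hQW.1 (hQW.2 i).1 (hQW.2 i).2) (hP i)

theorem infoCost_tiltedChannel (hQ : Q ∈ stdSimplex ℝ β) :
    infoCost P Q (tiltedChannel ρ Q l) =
      l * expDist P ρ (tiltedChannel ρ Q l) - logPartition P ρ Q l := by
  rw [mul_expDist_sub_logPartition]
  exact sum_congr rfl fun i _ => congrArg (P i * ·) (relEntropy_expTilt hQ)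

theorem logPartition_zero (hQ : Q ∈ stdSimplex ℝ β) : logPartition P ρ Q 0 = 0 := by
  simp [logPartition, partitionFunction, hQ.2]

theorem infoCost_nonneg (hP : ∀ i, 0 ≤ P i) (hQW : (Q, W) ∈ testChannels α β) :
    0 ≤ infoCost P Q W := by
  simpa [logPartition_zero hQW.1] using
    mul_expDist_sub_logPartition_le_infoCost (ρ := 0) (l := 0) hP hQW

theorem bddBelow_infoCost (hP : ∀ i, 0 ≤ P i) :
    BddBelow ((fun x => infoCost P x.1 x.2) '' testChannels α β) :=
  ⟨0, by rintro _ ⟨x, hx, rfl⟩; exact infoCost_nonneg hP hx⟩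

theorem convexOn_infoCost (hP : ∀ i, 0 ≤ P i) :
    ConvexOn ℝ (testChannels α β) (fun x => infoCost P x.1 x.2) := by
  refine ⟨convex_testChannels, fun x hx y hy a b ha hb hab => ?_⟩
  simp only [infoCost, relEntropy, smul_eq_mul, mul_sum, ← sum_add_distrib]
  refine sum_le_sum fun i _ => sum_le_sum fun j _ => ?_
  have hconv := mul_le_mul_of_nonneg_left (convexOn_mul_log_div.2
    (mk_apply_mem_of_mem_testChannels hx i j) (mk_apply_mem_of_mem_testChannels hy i j)
    ha hb hab) (hP i)
  simp only [Prod.smul_mk, Prod.mk_add_mk, smul_eq_mul] at hconv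
  simp only [Prod.fst_add, Prod.snd_add, Prod.smul_fst, Prod.smul_snd, Pi.add_apply,
    Pi.smul_apply, smul_eq_mul]
  linear_combination hconv

theorem isLinearMap_expDist : IsLinearMap ℝ (expDist P ρ) where
  map_add W W' := by simp only [expDist, Pi.add_apply, mul_add, add_mul, sum_add_distrib]
  map_smul c W := by
    simp only [expDist, Pi.smul_apply, smul_eq_mul, mul_sum]
    congr! 2
    ring

theorem convexOn_expDist : ConvexOn ℝ (testChannels α β) (fun x => expDist P ρ x.2) :=
  (isLinearMap_expDist.mk' _ ∘ₗ LinearMap.snd ℝ (β → ℝ) (α → β → ℝ)).convexOn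
    convex_testChannels

theorem infoCost_const : infoCost P Q (fun _ => Q) = 0 := by
  refine sum_eq_zero fun i _ => mul_eq_zero_of_right _ (sum_eq_zero fun j _ => ?_)
  rcases eq_or_ne (Q j) 0 with hj | hj <;> simp [hj]

end Channels

section Optimality

variable {α β : Type*} [Fintype α] [Fintype β]
  {P : α → ℝ} {ρ : α → β → ℝ} {Q Q' : β → ℝ} {D l : ℝ}

/-- The ratio to `Q` of the output law of the tilted channel. It is also the partial derivative of
`Λ_{P,Q}(l)` with respect to `Q j`, hence defined where `Q j = 0` too. -/
noncomputable def outputRatio (P : α → ℝ) (ρ : α → β → ℝ) (Q : β → ℝ) (l : ℝ) (j : β) : ℝ :=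
  ∑ i, P i * exp (l * ρ i j) / partitionFunction Q fun j' => l * ρ i j'

theorem hasDerivAt_logPartition (hQ : Q ∈ stdSimplex ℝ β) :
    HasDerivAt (logPartition P ρ Q) (expDist P ρ (tiltedChannel ρ Q l)) l := by
  have hZ (i : α) : HasDerivAt (fun l => partitionFunction Q fun j => l * ρ i j)
      (∑ j, Q j * (exp (l * ρ i j) * ρ i j)) l :=
    HasDerivAt.fun_sum fun j _ => ((hasDerivAt_mul_const (ρ i j)).exp).const_mul (Q j)
  refine (HasDerivAt.fun_sum fun i _ =>
    ((hZ i).log (partitionFunction_pos hQ).ne').const_mul (P i)).congr_deriv ?_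
  simp only [expDist, tiltedChannel, expTilt, sum_div, mul_sum]
  congr! 2
  ring

theorem mul_outputRatio (P : α → ℝ) (ρ : α → β → ℝ) (Q : β → ℝ) (l : ℝ) (j : β) :
    Q j * outputRatio P ρ Q l j =
      ∑ i, P i * Q j * exp (l * ρ i j) / ∑ j', Q j' * exp (l * ρ i j') := by
  simp only [outputRatio, partitionFunction, mul_sum]
  congr! 1
  ring

theorem sum_mul_outputRatio (P : α → ℝ) (ρ : α → β → ℝ) (Q Q' : β → ℝ) (l : ℝ) :
    ∑ j, Q' j * outputRatio P ρ Q l j =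
      ∑ i, P i * ((partitionFunction Q' fun j => l * ρ i j) /
        partitionFunction Q fun j => l * ρ i j) := by
  simp only [outputRatio, mul_sum]
  rw [sum_comm]
  refine sum_congr rfl fun i _ => ?_
  rw [partitionFunction.eq_1 Q', sum_div, mul_sum]
  congr! 1
  ring

theorem sum_mul_outputRatio_self (hP : ∑ i, P i = 1) (hQ : Q ∈ stdSimplex ℝ β) :
    ∑ j, Q j * outputRatio P ρ Q l j = 1 := by
  simp only [sum_mul_outputRatio, div_self (partitionFunction_pos hQ).ne', mul_one, hP]

theorem logPartition_sub_le (hP : P ∈ stdSimplex ℝ α) (hQ : Q ∈ stdSimplex ℝ β)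
    (hQ' : Q' ∈ stdSimplex ℝ β) :
    logPartition P ρ Q' l - logPartition P ρ Q l ≤ ∑ j, Q' j * outputRatio P ρ Q l j - 1 := by
  rw [sum_mul_outputRatio, ← hP.2]
  simp only [logPartition, ← sum_sub_distrib, ← mul_sub, ← mul_sub_one]
  refine sum_le_sum fun i _ => mul_le_mul_of_nonneg_left ?_ (hP.1 i)
  have hZ := partitionFunction_pos (φ := fun j => l * ρ i j) hQ
  have hZ' := partitionFunction_pos (φ := fun j => l * ρ i j) hQ'
  rw [← log_div hZ'.ne' hZ.ne']
  exact log_le_sub_one_of_pos (div_pos hZ' hZ)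

theorem hasFDerivAt_logPartition (hQ : Q ∈ stdSimplex ℝ β) :
    HasFDerivAt (fun Q => logPartition P ρ Q l)
      (∑ j, outputRatio P ρ Q l j • ContinuousLinearMap.proj (R := ℝ) (φ := fun _ => ℝ) j) Q := by
  have hZ (i : α) : HasFDerivAt (fun Q => partitionFunction Q fun j => l * ρ i j)
      (∑ j, exp (l * ρ i j) • ContinuousLinearMap.proj (R := ℝ) (φ := fun _ => ℝ) j) Q :=
    HasFDerivAt.fun_sum fun j _ => (hasFDerivAt_apply j Q).mul_const (exp (l * ρ i j))
  refine (HasFDerivAt.fun_sum fun i _ =>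
    ((hZ i).log (partitionFunction_pos hQ).ne').const_mul (P i)).congr_fderiv ?_
  ext v
  simp only [outputRatio, _root_.sum_apply, _root_.smul_apply,
    ContinuousLinearMap.proj_apply, smul_eq_mul, mul_sum, sum_mul]
  rw [sum_comm]
  congr! 2
  ring

theorem isMaxOn_logPartition_iff (hP : P ∈ stdSimplex ℝ α) (hQ : Q ∈ stdSimplex ℝ β) :
    IsMaxOn (fun Q => logPartition P ρ Q l) (stdSimplex ℝ β) Q ↔
      ∀ j, outputRatio P ρ Q l j ≤ 1 := by
  classical
  refine ⟨fun hmax j => ?_, fun hratio Q' hQ' => ?_⟩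
  · have hdir : Pi.single j 1 - Q ∈ posTangentConeAt (stdSimplex ℝ β) Q :=
      sub_mem_posTangentConeAt_of_segment_subset <|
        (convex_stdSimplex ℝ β).segment_subset hQ (single_mem_stdSimplex ℝ j)
    have hderiv := hmax.localize.hasFDerivWithinAt_nonpos
      (hasFDerivAt_logPartition hQ).hasFDerivWithinAt hdir
    simpa [mul_sub, Pi.single_apply, mul_comm _ (Q _), sum_mul_outputRatio_self hP.2 hQ]
      using hderiv
  · have hsum : ∑ j, Q' j * outputRatio P ρ Q l j ≤ ∑ j, Q' j :=
      sum_le_sum fun j _ => mul_le_of_le_one_right (hQ'.1 j) (hratio j)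
    have := logPartition_sub_le (ρ := ρ) (l := l) hP hQ hQ'
    have := hQ'.2
    simp only [Set.mem_ofPred_eq]
    linarith

theorem outputRatio_le_one_iff (hP : ∑ i, P i = 1) (hQ : Q ∈ stdSimplex ℝ β) :
    (∀ j, outputRatio P ρ Q l j ≤ 1) ↔
      (∀ j, Q j * outputRatio P ρ Q l j = Q j) ∧ ∀ j, Q j = 0 → outputRatio P ρ Q l j ≤ 1 := by
  refine ⟨fun h => ⟨fun j => ?_, fun j _ => h j⟩, fun ⟨hpos, hzero⟩ j => ?_⟩
  · exact (sum_eq_sum_iff_of_le fun j _ => mul_le_of_le_one_right (hQ.1 j) (h j)).1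
      ((sum_mul_outputRatio_self hP hQ).trans hQ.2.symm) j (mem_univ j)
  · by_cases hj : Q j = 0
    · exact hzero j hj
    · exact (mul_eq_left₀ hj).1 (hpos j) |>.le

theorem mul_sub_logPartition_le_of_mem_costs (hP : ∀ i, 0 ≤ P i) (hl : l ≤ 0) {c : ℝ}
    (hc : c ∈ costs P ρ Q D) : l * D - logPartition P ρ Q l ≤ c := by
  obtain ⟨W, ⟨hQW, hW⟩, rfl⟩ := hc
  linarith [mul_expDist_sub_logPartition_le_infoCost (ρ := ρ) (l := l) hP hQW,
    mul_le_mul_of_nonpos_left hW hl]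

theorem mul_sub_logPartition_mem_costs (hQ : Q ∈ stdSimplex ℝ β)
    (hD : expDist P ρ (tiltedChannel ρ Q l) = D) :
    l * D - logPartition P ρ Q l ∈ costs P ρ Q D :=
  ⟨tiltedChannel ρ Q l, ⟨mk_tiltedChannel_mem_testChannels hQ, hD.le⟩, by
    rw [infoCost_tiltedChannel hQ, hD]⟩

theorem lt_expDist_const (hQ : Q ∈ stdSimplex ℝ β) (hD : ∀ j, D < ∑ i, P i * ρ i j) :
    D < expDist P ρ fun _ => Q := by
  have hmem : ∑ j, Q j • ∑ i, P i * ρ i j ∈ Set.Ioi D :=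
    (convex_Ioi D).sum_mem (fun j _ => hQ.1 j) hQ.2 fun j _ => hD j
  refine (Set.mem_Ioi.1 hmem).trans_eq ?_
  simp only [expDist, smul_eq_mul, mul_sum]
  rw [sum_comm]
  congr! 2
  ring

theorem pos_of_mul_sub_logPartition_le {v : ℝ} (hQ : Q ∈ stdSimplex ℝ β)
    (hD : ∀ j, D < ∑ i, P i * ρ i j) (hv : ∀ l ≤ 0, l * D - logPartition P ρ Q l ≤ v) :
    0 < v := by
  by_contra! hv0
  have hmax : IsMaxOn (fun l => l * D - logPartition P ρ Q l) (Set.Iic 0) 0 := fun l hl => by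
    simpa [logPartition_zero hQ] using (hv l hl).trans hv0
  have hdir : (-1 : ℝ) - 0 ∈ posTangentConeAt (Set.Iic (0 : ℝ)) 0 :=
    sub_mem_posTangentConeAt_of_segment_subset <|
      (convex_Iic 0).segment_subset Set.self_mem_Iic (by simp)
  have hderiv := hmax.localize.hasFDerivWithinAt_nonpos ((hasDerivAt_mul_const D).sub
    (hasDerivAt_logPartition hQ)).hasFDerivAt.hasFDerivWithinAt hdir
  have hdist := lt_expDist_const hQ hD
  rw [← tiltedChannel_zero (ρ := ρ) hQ] at hdist
  simp at hderiv
  linarith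

theorem expDist_single [DecidableEq β] (y : α → β) :
    expDist P ρ (fun i => Pi.single (y i) 1) = ∑ i, P i * ρ i (y i) := by
  simp [expDist, Pi.single_apply]

theorem exists_mem_testChannels_expDist_lt (hP : ∑ i, P i = 1)
    (hDmin : ∃ y : α → β, ∑ i, P i * ρ i (y i) < D) :
    ∃ x ∈ testChannels α β, expDist P ρ x.2 < D := by
  classical
  obtain ⟨y, hy⟩ := hDmin
  obtain ⟨i⟩ : Nonempty α := not_isEmpty_iff.1 fun _ => by simp at hP
  have : Nonempty β := ⟨y i⟩
  have hcard : (0 : ℝ) < Fintype.card β := by exact_mod_cast Fintype.card_pos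
  refine ⟨(fun _ => (Fintype.card β : ℝ)⁻¹, fun i => Pi.single (y i) 1), ⟨⟨fun _ => ?_, ?_⟩,
    fun i => ⟨single_mem_stdSimplex ℝ (y i), fun _ _ => inv_pos.2 hcard⟩⟩, ?_⟩
  · positivity
  · simp
  · rwa [expDist_single]

theorem isGLB_rate (hP : P ∈ stdSimplex ℝ α) (hDmin : ∃ y : α → β, ∑ i, P i * ρ i (y i) < D) :
    IsGLB (⋃ Q, costs P ρ Q D) (rate P ρ D) := by
  obtain ⟨x, hx, hxD⟩ := exists_mem_testChannels_expDist_lt hP.2 hDmin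
  have hunion : ⋃ Q, costs P ρ Q D =
      (fun x => infoCost P x.1 x.2) '' {x ∈ testChannels α β | expDist P ρ x.2 ≤ D} := by
    ext c
    simp [costs, Set.mem_iUnion]
  rw [hunion]
  exact isGLB_csInf ⟨_, x, ⟨hx, hxD.le⟩, rfl⟩
    ((bddBelow_infoCost hP.1).mono (Set.image_mono (Set.sep_subset _ _)))

theorem exists_saddle_multiplier (hP : P ∈ stdSimplex ℝ α)
    (hDmin : ∃ y : α → β, ∑ i, P i * ρ i (y i) < D) :
    ∃ l, (∀ j, rate P ρ D ≤ l * (D - ∑ i, P i * ρ i j)) ∧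
      ∀ Q ∈ stdSimplex ℝ β, rate P ρ D ≤ l * D - logPartition P ρ Q l := by
  classical
  obtain ⟨l, hl⟩ := exists_lagrange_multiplier (convexOn_infoCost hP.1) convexOn_expDist
    (bddBelow_infoCost hP.1) (exists_mem_testChannels_expDist_lt hP.2 hDmin)
  refine ⟨l, fun j => ?_, fun Q hQ => ?_⟩
  · have hmem : (Pi.single j 1, fun _ => Pi.single j 1) ∈ testChannels α β :=
      ⟨single_mem_stdSimplex ℝ j, fun _ => ⟨single_mem_stdSimplex ℝ j, fun _ => id⟩⟩
    simpa only [rate, infoCost_const, expDist_single, zero_add] using hl _ hmem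
  · refine (hl _ (mk_tiltedChannel_mem_testChannels (ρ := ρ) (l := l) hQ)).trans_eq ?_
    simp only [infoCost_tiltedChannel hQ]
    ring

theorem exists_saddle_of_isGLB (hP : P ∈ stdSimplex ℝ α)
    (hDmin : ∃ y : α → β, ∑ i, P i * ρ i (y i) < D) (hDmax : ∀ j, D < ∑ i, P i * ρ i j)
    (hQ : Q ∈ stdSimplex ℝ β) (hglb : IsGLB (costs P ρ Q D) (rate P ρ D)) :
    ∃ l < 0, HasDerivAt (logPartition P ρ Q) D l ∧
      IsMaxOn (fun Q => logPartition P ρ Q l) (stdSimplex ℝ β) Q := by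
  have dual_le_rate : ∀ l ≤ 0, l * D - logPartition P ρ Q l ≤ rate P ρ D := fun l hl =>
    hglb.2 fun _ hc => mul_sub_logPartition_le_of_mem_costs hP.1 hl hc
  have rate_pos := pos_of_mul_sub_logPartition_le hQ hDmax dual_le_rate
  obtain ⟨l, rate_le_const, rate_le_dual⟩ := exists_saddle_multiplier hP hDmin
  obtain ⟨j⟩ : Nonempty β := not_isEmpty_iff.1 fun _ => by simpa using hQ.2
  have hl : l < 0 := neg_of_mul_pos_left (rate_pos.trans_le (rate_le_const j))
    (sub_neg.2 (hDmax j)).le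
  refine ⟨l, hl, ?_, fun Q' hQ' => ?_⟩
  · have hmax : IsLocalMax (fun l => l * D - logPartition P ρ Q l) l := by
      filter_upwards [Iic_mem_nhds hl] with l' hl'
      exact (dual_le_rate l' hl').trans (rate_le_dual Q hQ)
    have hderiv := hasDerivAt_logPartition (P := P) (ρ := ρ) (l := l) hQ
    have stationary := hmax.hasDerivAt_eq_zero ((hasDerivAt_mul_const D).sub hderiv)
    exact hderiv.congr_deriv (sub_eq_zero.1 stationary).symm
  · have := (dual_le_rate l hl.le).trans (rate_le_dual Q' hQ')
    simp only [Set.mem_ofPred_eq]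
    linarith

theorem isGLB_of_saddle (hP : P ∈ stdSimplex ℝ α)
    (hDmin : ∃ y : α → β, ∑ i, P i * ρ i (y i) < D) (hQ : Q ∈ stdSimplex ℝ β) (hl : l ≤ 0)
    (hderiv : HasDerivAt (logPartition P ρ Q) D l)
    (hmax : IsMaxOn (fun Q => logPartition P ρ Q l) (stdSimplex ℝ β) Q) :
    IsGLB (costs P ρ Q D) (rate P ρ D) := by
  have hmem : l * D - logPartition P ρ Q l ∈ costs P ρ Q D :=
    mul_sub_logPartition_mem_costs hQ ((hasDerivAt_logPartition hQ).unique hderiv)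
  have hleast : IsLeast (⋃ Q, costs P ρ Q D) (l * D - logPartition P ρ Q l) := by
    refine ⟨Set.mem_iUnion_of_mem Q hmem, fun c hc => ?_⟩
    obtain ⟨Q', hc⟩ := Set.mem_iUnion.1 hc
    have hQ' : Q' ∈ stdSimplex ℝ β := hc.choose_spec.1.1.1
    exact (sub_le_sub_left (hmax hQ') _).trans (mul_sub_logPartition_le_of_mem_costs hP.1 hl hc)
  rw [(isGLB_rate hP hDmin).unique hleast.isGLB]
  exact IsLeast.isGLB ⟨hmem, fun c hc => hleast.2 (Set.mem_iUnion_of_mem Q hc)⟩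

end Optimality

section Bits

theorem iInf_div_log_two_eq_iff {s : Set ℝ} {r : ℝ} :
    ⨅ c ∈ s, ((c / log 2 : ℝ) : EReal) = ((r / log 2 : ℝ) : EReal) ↔ IsGLB s r := by
  have hlog : (0 : ℝ) < log 2 := log_pos one_lt_two
  have hmono (x y : ℝ) : ((x / log 2 : ℝ) : EReal) ≤ ((y / log 2 : ℝ) : EReal) ↔ x ≤ y := by
    rw [EReal.coe_le_coe_iff, div_le_div_iff_of_pos_right hlog]
  have hcont : Continuous fun c : ℝ => ((c / log 2 : ℝ) : EReal) :=
    continuous_coe_real_ereal.comp (continuous_id.div_const _)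
  refine ⟨fun h => .of_image @hmono (h ▸ sInf_image (α := EReal) ▸ isGLB_sInf _), fun h => ?_⟩
  rw [← sInf_image]
  exact (h.isGLB_of_tendsto (fun _ _ _ _ => (hmono _ _).2) h.nonempty
    hcont.continuousWithinAt.tendsto).sInf_eq

variable {k : ℕ} {P Q : Fin k → ℝ} {ρ W : Fin k → Fin k → ℝ} {D : ℝ}

theorem wCost_eq_infoCost_div_log_two (hWQ : ∀ i j, 0 < W i j → 0 < Q j) :
    wCost P Q W = ((infoCost P Q W / log 2 : ℝ) : EReal) := by
  rw [wCost, if_pos hWQ]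
  simp only [infoCost, relEntropy, logb, mul_sum, sum_div, mul_assoc, mul_div_assoc]

theorem RPQ_eq_iInf_costs (hQ : IsPmf Q) :
    RPQ P ρ Q D = ⨅ c ∈ costs P ρ Q D, ((c / log 2 : ℝ) : EReal) := by
  refine le_antisymm (le_iInf₂ ?_) (le_iInf₂ fun W hW => ?_)
  · rintro _ ⟨W, ⟨hQW, hWD⟩, rfl⟩
    exact iInf₂_le_of_le W ⟨fun i => (hQW.2 i).1.1, fun i => (hQW.2 i).1.2, hWD⟩
      (wCost_eq_infoCost_div_log_two fun i => (hQW.2 i).2).le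
  · by_cases hWQ : ∀ i j, 0 < W i j → 0 < Q j
    · rw [wCost_eq_infoCost_div_log_two hWQ]
      exact iInf₂_le _ ⟨W, ⟨⟨hQ, fun i => ⟨⟨hW.1 i, hW.2.1 i⟩, hWQ i⟩⟩, hW.2.2⟩, rfl⟩
    · rw [wCost, if_neg hWQ]
      exact le_top

theorem RofD_eq_rate_div_log_two (hP : IsPmf P)
    (hDmin : ∃ y : Fin k → Fin k, ∑ i, P i * ρ i (y i) < D) :
    RofD P ρ D = ((rate P ρ D / log 2 : ℝ) : EReal) := by
  rw [← iInf_div_log_two_eq_iff.2 (isGLB_rate hP hDmin), iInf_iUnion, RofD]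
  refine iInf_congr fun Q => ?_
  by_cases hQ : IsPmf Q
  · simp only [Set.mem_ofPred_eq, hQ, iInf_pos, RPQ_eq_iInf_costs hQ]
  · have hempty : costs P ρ Q D = ∅ :=
      Set.image_eq_empty.2 <| Set.eq_empty_of_forall_notMem fun W hW => hQ hW.1.1
    simp [hQ, hempty]

theorem RPQ_eq_RofD_iff (hP : IsPmf P) (hDmin : ∃ y : Fin k → Fin k, ∑ i, P i * ρ i (y i) < D)
    (hQ : IsPmf Q) :
    RPQ P ρ Q D = RofD P ρ D ↔ IsGLB (costs P ρ Q D) (rate P ρ D) := by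
  rw [RPQ_eq_iInf_costs hQ, RofD_eq_rate_div_log_two hP hDmin, iInf_div_log_two_eq_iff]

theorem Dmax_le (j : Fin k) : Dmax P ρ ≤ ∑ i, P i * ρ i j :=
  csInf_le (Set.finite_range _).bddBelow (Set.mem_range_self j)

end Bits

end RateDistortion

open RateDistortion

theorem stmt_17_general {α β : Type*} [Fintype α] [Fintype β] {P : α → ℝ} {ρ : α → β → ℝ} {D : ℝ}
    {Q : β → ℝ} (hP : P ∈ stdSimplex ℝ α) (hDmin : ∃ y : α → β, ∑ i, P i * ρ i (y i) < D)
    (hDmax : ∀ j, D < ∑ i, P i * ρ i j) (hQ : Q ∈ stdSimplex ℝ β) :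
    IsGLB (costs P ρ Q D) (rate P ρ D) ↔
      ∃ l : ℝ, l < 0 ∧ HasDerivAt (logPartition P ρ Q) D l ∧
        (∀ j, ∑ i, (P i * Q j * exp (l * ρ i j)) / (∑ j', Q j' * exp (l * ρ i j')) = Q j) ∧
        (∀ j, Q j = 0 → ∑ i, (P i * exp (l * ρ i j)) / (∑ j', Q j' * exp (l * ρ i j')) ≤ 1) := by
  have kuhnTucker (l : ℝ) : IsMaxOn (fun Q => logPartition P ρ Q l) (stdSimplex ℝ β) Q ↔
      (∀ j, ∑ i, (P i * Q j * exp (l * ρ i j)) / (∑ j', Q j' * exp (l * ρ i j')) = Q j) ∧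
        ∀ j, Q j = 0 → outputRatio P ρ Q l j ≤ 1 := by
    rw [isMaxOn_logPartition_iff hP hQ, outputRatio_le_one_iff hP.2 hQ]
    simp only [mul_outputRatio]
  constructor
  · intro hglb
    obtain ⟨l, hl, hderiv, hmax⟩ := exists_saddle_of_isGLB hP hDmin hDmax hQ hglb
    exact ⟨l, hl, hderiv, (kuhnTucker l).1 hmax⟩
  · rintro ⟨l, hl, hderiv, hKT⟩
    exact isGLB_of_saddle hP hDmin hQ hl.le hderiv ((kuhnTucker l).2 hKT)

/-- **Lemma 3.** A pmf `Q*` achieves the infimum defining `R(D)` if and only if there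
is `λ* < 0` such that (a) `Λ'_{P,Q*}(λ*) = D`; (b) the second marginal of
`W(a_i,a_j) = P_i Q*_j e^{λ* ρ_ij} / Σ_{j'} Q*_{j'} e^{λ* ρ_{ij'}}` is `Q*`; and
(c) `Σ_i P_i e^{λ* ρ_ij} / Σ_{j'} Q*_{j'} e^{λ* ρ_{ij'}} ≤ 1` whenever `Q*_j = 0`. -/
theorem stmt_17 {k : ℕ} (hk : 2 ≤ k)
    (P : Fin k → ℝ) (ρ : Fin k → Fin k → ℝ)
    (hP : IsPmf P) (hPpos : ∀ i, 0 < P i)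
    (hρnn : ∀ i j, 0 ≤ ρ i j) (hρsym : ∀ i j, ρ i j = ρ j i)
    (hρzero : ∀ i j, ρ i j = 0 ↔ i = j)
    (hDmax : 0 < Dmax P ρ)
    (D : ℝ) (hD : D ∈ Set.Ioo 0 (Dmax P ρ))
    (Q : Fin k → ℝ) (hQ : IsPmf Q) :
    RPQ P ρ Q D = RofD P ρ D ↔
      ∃ l : ℝ, l < 0 ∧
        HasDerivAt (Lam P ρ Q) D l ∧
        (∀ j, ∑ i, (P i * Q j * Real.exp (l * ρ i j)) /
            (∑ j', Q j' * Real.exp (l * ρ i j')) = Q j) ∧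
        (∀ j, Q j = 0 → ∑ i, (P i * Real.exp (l * ρ i j)) /
            (∑ j', Q j' * Real.exp (l * ρ i j')) ≤ 1) := by
  have hDmin : ∃ y : Fin k → Fin k, ∑ i, P i * ρ i (y i) < D :=
    ⟨id, by simpa [(hρzero _ _).2 rfl] using hD.1⟩
  exact (RPQ_eq_RofD_iff hP hDmin hQ).trans
    (stmt_17_general hP hDmin (fun j => hD.2.trans_le (Dmax_le j)) hQ)
end
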